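/- For $L \ge 1$ and $S \subseteq \mathbb{Z}_L$ (the integers mod $L$), let $d^*(S) = \{a-b \bmod L : a,b\in S,\ a\ne b\}$. A conflict-avoiding code (CAC) of length $L$ and weight $w$ is a set of $w$-element subsets (codewords) of $\mathbb{Z}_L$ such that $d^*(S)\cap d^*(S')=\emptyset$ for all distinct codewords $S,S'$; it is equi-difference if every codeword has the form $\{0,g,2g,\ldots,(w-1)g\}$ for some $g\in\mathbb{Z}_L$. Let $w \ge 2$ be an integer and let $p_1 < p_2 < \cdots < p_n$ be primes with $p_1 \ge 2w-1$. Suppose that for each $i=1,\ldots,n$ there exists an equi-difference CAC of length $p_i$ and weight $w$ with $m_i$ codewords. Then for any positive integers $r_1,\ldots,r_n$ there exists an equi-difference CAC of length $L=p_1^{r_1}\cdots p_n^{r_n}$ and weight $w$ having exactly $$\sum_{i=1}^{n} \left( m_i\,\frac{p_i^{r_i}-1}{p_i-1}\prod_{j=i+1}^{n} p_j^{r_j}\right)$$ codewords. -/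

import Mathlib

/-- The set of nonzero differences `{a - b : a, b ∈ S, a ≠ b}` of a subset `S ⊆ Z_L`. -/
def dstar {L : ℕ} (S : Finset (ZMod L)) : Finset (ZMod L) :=
  ((S ×ˢ S).image fun p => p.1 - p.2).erase 0

/-- A conflict-avoiding code of length `L` and weight `w`. -/
def IsCAC (L w : ℕ) (C : Finset (Finset (ZMod L))) : Prop :=
  (∀ S ∈ C, S.card = w) ∧
  ∀ S ∈ C, ∀ S' ∈ C, S ≠ S' → Disjoint (dstar S) (dstar S')

/-- A codeword is equi-difference if it is of the form `{0, g, 2g, …, (w-1)g}`. -/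
def IsEquiDiff {L : ℕ} (w : ℕ) (S : Finset (ZMod L)) : Prop :=
  ∃ g : ZMod L, S = (Finset.range w).image fun j : ℕ => (j : ZMod L) * g

/-- `G` is a set of natural numbers generating, modulo `L`, the codewords `{0, g, …, (w-1)g}` of an
equi-difference conflict-avoiding code of weight `w`, distinct `g ∈ G` giving distinct codewords. -/
structure IsGeneratorSet (L w : ℕ) (G : Finset ℕ) : Prop where
  not_dvd : ∀ g ∈ G, ∀ j : ℤ, j ≠ 0 → |j| < w → ¬ (L : ℤ) ∣ j * g
  eq_of_dvd : ∀ g ∈ G, ∀ g' ∈ G, ∀ j j' : ℤ, j ≠ 0 → |j| < w → j' ≠ 0 → |j'| < w →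
    (L : ℤ) ∣ j * g - j' * g' → g = g'

/-- The codeword `{0, g, 2g, …, (w-1)g}`. -/
def equiCodeword {L : ℕ} (w : ℕ) (g : ZMod L) : Finset (ZMod L) :=
  (Finset.range w).image fun j : ℕ => (j : ZMod L) * g

theorem mem_dstar_equiCodeword {L w : ℕ} {g x : ZMod L} :
    x ∈ dstar (equiCodeword w g) ↔ x ≠ 0 ∧ ∃ j : ℤ, |j| < w ∧ x = j * g := by
  simp only [dstar, equiCodeword, Finset.mem_erase, Finset.mem_image, Finset.mem_product,
    Finset.mem_range, Prod.exists]
  refine and_congr_right fun _ => ⟨?_, ?_⟩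
  · rintro ⟨a, b, ⟨⟨i, hi, rfl⟩, ⟨k, hk, rfl⟩⟩, rfl⟩
    refine ⟨(i : ℤ) - k, by rw [abs_lt]; omega, by push_cast; ring⟩
  · rintro ⟨j, hj, rfl⟩
    rw [abs_lt] at hj
    refine ⟨(j.toNat : ZMod L) * g, ((-j).toNat : ZMod L) * g,
      ⟨⟨_, by omega, rfl⟩, ⟨_, by omega, rfl⟩⟩, ?_⟩
    rw [← sub_mul]
    congr 1
    have h : ((j.toNat : ℤ) - ((-j).toNat : ℤ)) = j := by omega
    calc (j.toNat : ZMod L) - ((-j).toNat : ZMod L)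
        = (((j.toNat : ℤ) - ((-j).toNat : ℤ) : ℤ) : ZMod L) := by push_cast; rfl
      _ = j := by rw [h]

theorem mul_ne_zero_of_card_equiCodeword {L w : ℕ} {g : ZMod L}
    (h : (equiCodeword w g).card = w) {j : ℤ} (hj : j ≠ 0) (hjw : |j| < w) :
    (j : ZMod L) * g ≠ 0 := by
  have hinj : Set.InjOn (fun j : ℕ => (j : ZMod L) * g) (Finset.range w) :=
    Finset.card_image_iff.mp (by simpa [equiCodeword] using h)
  intro h0
  rw [abs_lt] at hjw
  have hmem : j.natAbs ∈ (Finset.range w : Set ℕ) := by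
    simp only [Finset.coe_range, Set.mem_Iio]; omega
  have h0mem : 0 ∈ (Finset.range w : Set ℕ) := by
    simp only [Finset.coe_range, Set.mem_Iio]; omega
  have := hinj hmem h0mem (by
    rcases Int.natAbs_eq j with e | e
    · rw [e] at h0
      simpa using h0
    · rw [e] at h0
      simpa using h0)
  omega

theorem exists_isGeneratorSet {L w : ℕ} [NeZero L] {C : Finset (Finset (ZMod L))}
    (hC : IsCAC L w C) (hE : ∀ S ∈ C, IsEquiDiff w S) :
    ∃ G : Finset ℕ, IsGeneratorSet L w G ∧ G.card = C.card := by
  choose! γ hγ using hE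
  have hγ' : ∀ S ∈ C, S = equiCodeword w (γ S) := hγ
  have hne : ∀ S ∈ C, ∀ j : ℤ, j ≠ 0 → |j| < w → (j : ZMod L) * γ S ≠ 0 := fun S hS j hj hjw =>
    mul_ne_zero_of_card_equiCodeword (by rw [← hγ' S hS]; exact hC.1 S hS) hj hjw
  refine ⟨C.image fun S => (γ S).val, ⟨?_, ?_⟩, ?_⟩
  · simp only [Finset.forall_mem_image]
    intro S hS j hj hjw hd
    rw [← ZMod.intCast_zmod_eq_zero_iff_dvd] at hd
    refine hne S hS j hj hjw ?_
    simpa using hd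
  · simp only [Finset.forall_mem_image]
    intro S hS S' hS' j j' hj hjw hj' hjw' hd
    rw [← ZMod.intCast_zmod_eq_zero_iff_dvd] at hd
    have hd' : (j : ZMod L) * γ S = j' * γ S' := by
      rw [← sub_eq_zero]; simpa using hd
    by_contra hSS
    have hdis := hC.2 S hS S' hS' (fun h => hSS (by rw [h]))
    rw [hγ' S hS, hγ' S' hS'] at hdis
    exact Finset.disjoint_left.mp hdis
      (mem_dstar_equiCodeword.mpr ⟨hne S hS j hj hjw, j, hjw, rfl⟩)
      (mem_dstar_equiCodeword.mpr ⟨hne S hS j hj hjw, j', hjw', hd'⟩)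
  · refine Finset.card_image_of_injOn fun S hS S' hS' h => ?_
    rw [hγ' S hS, hγ' S' hS', ZMod.val_injective L h]

theorem IsGeneratorSet.exists_isCAC {L w : ℕ} (hw : 2 ≤ w) {G : Finset ℕ}
    (hG : IsGeneratorSet L w G) :
    ∃ C : Finset (Finset (ZMod L)), IsCAC L w C ∧ (∀ S ∈ C, IsEquiDiff w S) ∧
      C.card = G.card := by
  have hdis : ∀ g ∈ G, ∀ g' ∈ G, g ≠ g' →
      Disjoint (dstar (equiCodeword w (g : ZMod L))) (dstar (equiCodeword w (g' : ZMod L))) := by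
    intro g hg g' hg' hgg
    rw [Finset.disjoint_left]
    intro x hx hx'
    obtain ⟨hx0, j, hjw, hxj⟩ := mem_dstar_equiCodeword.mp hx
    obtain ⟨-, j', hjw', hxj'⟩ := mem_dstar_equiCodeword.mp hx'
    refine hgg (hG.eq_of_dvd g hg g' hg' j j' ?_ hjw ?_ hjw' ?_)
    · rintro rfl; simp at hxj; exact hx0 hxj
    · rintro rfl; simp at hxj'; exact hx0 hxj'
    · rw [← ZMod.intCast_zmod_eq_zero_iff_dvd]
      push_cast
      rw [← hxj, ← hxj', sub_self]
  refine ⟨G.image fun g : ℕ => equiCodeword w (g : ZMod L), ⟨?_, ?_⟩, ?_, ?_⟩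
  · simp only [Finset.forall_mem_image]
    intro g hg
    rw [equiCodeword, Finset.card_image_of_injOn, Finset.card_range]
    intro a ha b hb hab
    simp only [Finset.coe_range, Set.mem_Iio] at ha hb
    by_contra hne
    refine hG.not_dvd g hg ((a : ℤ) - b) (by omega) (by rw [abs_lt]; omega) ?_
    rw [← ZMod.intCast_zmod_eq_zero_iff_dvd]
    push_cast
    rw [sub_mul, sub_eq_zero]
    exact hab
  · simp only [Finset.forall_mem_image]
    exact fun g hg g' hg' h => hdis g hg g' hg' fun e => h (by rw [e])
  · simp only [Finset.forall_mem_image]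
    exact fun g _ => ⟨g, rfl⟩
  · refine Finset.card_image_of_injOn fun g hg g' hg' h => ?_
    by_contra hne
    have hd := hdis g hg g' hg' hne
    rw [← h, Finset.disjoint_self_iff_empty] at hd
    have h1 : (g : ZMod L) ∈ dstar (equiCodeword w (g : ZMod L)) := by
      refine mem_dstar_equiCodeword.mpr ⟨fun h0 => ?_, 1, by simp; omega, by simp⟩
      refine hG.not_dvd g hg 1 one_ne_zero (by simp; omega) ?_
      rw [← ZMod.intCast_zmod_eq_zero_iff_dvd]
      simpa using h0
    rw [hd] at h1
    simp at h1

/-- Every generator `h` modulo `p` lifts to the `L` generators `h + p * k` modulo `p * L`, and every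
generator `g` modulo `L` gives the generator `p * g`. -/
theorem IsGeneratorSet.exists_mul {p L w : ℕ} (hw : 2 ≤ w) (hp : p.Prime) (hpw : 2 * w - 1 ≤ p)
    (hL : ∀ j : ℤ, j ≠ 0 → |j| < w → IsCoprime (L : ℤ) j) {H G : Finset ℕ}
    (hH : IsGeneratorSet p w H) (hG : IsGeneratorSet L w G) :
    ∃ K : Finset ℕ, IsGeneratorSet (p * L) w K ∧ K.card = H.card * L + G.card := by
  have hp' : Prime (p : ℤ) := Nat.prime_iff_prime_int.mp hp
  have h1w : |(1 : ℤ)| < w := by simp; omega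
  have hmix : ∀ h ∈ H, ∀ k : ℕ, ∀ j x : ℤ, j ≠ 0 → |j| < w →
      ¬ ((p * L : ℕ) : ℤ) ∣ j * ((h + p * k : ℕ) : ℤ) - p * x := by
    intro h hh k j x hj hjw hd
    push_cast at hd
    refine hH.not_dvd h hh j hj hjw ?_
    have h2 : (p : ℤ) ∣ j * (h + p * k) - p * x := (Dvd.intro _ rfl).trans hd
    have h3 : j * (h : ℤ) = (j * (h + p * k) - p * x) + p * (x - j * k) := by ring
    rw [h3]
    exact dvd_add h2 (Dvd.intro _ rfl)
  have hlift : ∀ h ∈ H, ∀ h' ∈ H, ∀ k < L, ∀ k' < L, ∀ j j' : ℤ, j ≠ 0 → |j| < w → j' ≠ 0 →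
      |j'| < w → ((p * L : ℕ) : ℤ) ∣ j * ((h + p * k : ℕ) : ℤ) - j' * ((h' + p * k' : ℕ) : ℤ) →
      h = h' ∧ k = k' := by
    intro h hh h' hh' k hk k' hk' j j' hj hjw hj' hjw' hd
    push_cast at hd
    have h2 : (p : ℤ) ∣ j * h - j' * h' := by
      have h3 : j * (h : ℤ) - j' * h' =
          (j * (h + p * k) - j' * (h' + p * k')) + p * (j' * k' - j * k) := by ring
      rw [h3]
      exact dvd_add ((Dvd.intro _ rfl).trans hd) (Dvd.intro _ rfl)
    obtain rfl := hH.eq_of_dvd h hh h' hh' j j' hj hjw hj' hjw' h2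
    refine ⟨rfl, ?_⟩
    rw [← sub_mul] at h2
    have hph : ¬ (p : ℤ) ∣ h := by simpa using hH.not_dvd h hh 1 one_ne_zero h1w
    have hjj : (p : ℤ) ∣ j - j' := (hp'.dvd_or_dvd h2).resolve_right hph
    have hjj0 : j - j' = 0 := by
      refine Int.eq_zero_of_abs_lt_dvd hjj ?_
      rw [abs_lt] at *
      omega
    obtain rfl : j = j' := sub_eq_zero.mp hjj0
    have h4 : j * ((h : ℤ) + p * k) - j * (h + p * k') = p * (j * (k - k')) := by ring
    rw [h4, mul_dvd_mul_iff_left hp'.ne_zero] at hd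
    have hkk : (L : ℤ) ∣ k - k' := (hL j hj hjw).dvd_of_dvd_mul_left hd
    have := Int.eq_zero_of_abs_lt_dvd hkk (by rw [abs_lt]; omega)
    omega
  have hmem : ∀ x, x ∈ ((H ×ˢ Finset.range L).image (fun q => q.1 + p * q.2) ∪
      G.image (fun g => p * g)) ↔
      (∃ h ∈ H, ∃ k < L, h + p * k = x) ∨ ∃ g ∈ G, p * g = x := by
    intro x
    simp only [Finset.mem_union, Finset.mem_image, Finset.mem_product, Finset.mem_range,
      Prod.exists]
    constructor
    · rintro (⟨a, b, ⟨h1, h2⟩, h3⟩ | h)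
      exacts [Or.inl ⟨a, h1, b, h2, h3⟩, Or.inr h]
    · rintro (⟨a, h1, b, h2, h3⟩ | h)
      exacts [Or.inl ⟨a, b, ⟨h1, h2⟩, h3⟩, Or.inr h]
  refine ⟨(H ×ˢ Finset.range L).image (fun q => q.1 + p * q.2) ∪ G.image (fun g => p * g),
    ⟨?_, ?_⟩, ?_⟩
  · intro x hx j hj hjw hd
    rcases (hmem x).mp hx with ⟨h, hh, k, hk, rfl⟩ | ⟨g, hg, rfl⟩
    · exact hmix h hh k j 0 hj hjw (by simpa using hd)
    · refine hG.not_dvd g hg j hj hjw ?_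
      push_cast at hd
      rwa [mul_left_comm, mul_dvd_mul_iff_left hp'.ne_zero] at hd
  · intro x hx y hy j j' hj hjw hj' hjw' hd
    rcases (hmem x).mp hx with ⟨h, hh, k, hk, rfl⟩ | ⟨g, hg, rfl⟩ <;>
      rcases (hmem y).mp hy with ⟨h', hh', k', hk', rfl⟩ | ⟨g', hg', rfl⟩
    · obtain ⟨rfl, rfl⟩ := hlift h hh h' hh' k hk k' hk' j j' hj hjw hj' hjw' hd
      rfl
    · refine absurd ?_ (hmix h hh k j (j' * g') hj hjw)
      convert hd using 1
      push_cast; ring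
    · refine absurd ?_ (hmix h' hh' k' j' (j * g) hj' hjw')
      convert Int.dvd_neg.mpr hd using 1
      push_cast; ring
    · push_cast at hd
      have h4 : j * ((p : ℤ) * g) - j' * (p * g') = p * (j * g - j' * g') := by ring
      rw [h4, mul_dvd_mul_iff_left hp'.ne_zero] at hd
      rw [hG.eq_of_dvd g hg g' hg' j j' hj hjw hj' hjw' hd]
  · rw [Finset.card_union_of_disjoint, Finset.card_image_of_injOn, Finset.card_product,
      Finset.card_range, Finset.card_image_of_injective]
    · exact mul_right_injective₀ hp.ne_zero
    · rintro ⟨h, k⟩ hq ⟨h', k'⟩ hq' e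
      simp only [Finset.coe_product, Set.mem_prod, Finset.mem_coe, Finset.mem_range] at hq hq'
      dsimp only at e
      obtain ⟨rfl, rfl⟩ := hlift h hq.1 h' hq'.1 k hq.2 k' hq'.2 1 1 one_ne_zero h1w one_ne_zero h1w
        (by rw [e]; simp)
      rfl
    · rw [Finset.disjoint_left]
      rintro x hx hx'
      obtain ⟨⟨h, k⟩, hq, rfl⟩ := Finset.mem_image.mp hx
      obtain ⟨g, -, e⟩ := Finset.mem_image.mp hx'
      refine hmix h (Finset.mem_product.mp hq).1 k 1 g one_ne_zero h1w ?_
      dsimp only at e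
      rw [← e]
      simp

theorem isCoprime_prime_of_abs_lt {p w : ℕ} (hp : p.Prime) (hpw : w ≤ p) {j : ℤ} (hj : j ≠ 0)
    (hjw : |j| < w) : IsCoprime (p : ℤ) j := by
  rw [Prime.coprime_iff_not_dvd (Nat.prime_iff_prime_int.mp hp)]
  exact fun h => hj (Int.eq_zero_of_abs_lt_dvd h (by omega))

theorem IsGeneratorSet.exists_pow_mul {p L w : ℕ} (hw : 2 ≤ w) (hp : p.Prime)
    (hpw : 2 * w - 1 ≤ p) (hL : ∀ j : ℤ, j ≠ 0 → |j| < w → IsCoprime (L : ℤ) j) {H G : Finset ℕ}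
    (hH : IsGeneratorSet p w H) (hG : IsGeneratorSet L w G) (r : ℕ) :
    ∃ K : Finset ℕ, IsGeneratorSet (p ^ r * L) w K ∧
      K.card = H.card * ((p ^ r - 1) / (p - 1)) * L + G.card := by
  simp only [← Nat.geomSum_eq hp.two_le]
  induction r with
  | zero => exact ⟨G, by simpa using hG, by simp⟩
  | succ r ih =>
    obtain ⟨K, hK, hcard⟩ := ih
    obtain ⟨K', hK', hcard'⟩ := hH.exists_mul hw hp hpw (L := p ^ r * L) (fun j hj hjw => by
      push_cast
      exact (isCoprime_prime_of_abs_lt hp (by omega) hj hjw).pow_left.mul_left (hL j hj hjw)) hK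
    refine ⟨K', by rwa [pow_succ', mul_assoc], ?_⟩
    rw [hcard', hcard, Finset.sum_range_succ]
    ring

theorem exists_isGeneratorSet_prod {w : ℕ} (hw : 2 ≤ w) :
    ∀ {n : ℕ} (p : Fin n → ℕ), (∀ i, (p i).Prime) → (∀ i, 2 * w - 1 ≤ p i) →
      ∀ H : Fin n → Finset ℕ, (∀ i, IsGeneratorSet (p i) w (H i)) → ∀ r : Fin n → ℕ,
      ∃ K : Finset ℕ, IsGeneratorSet (∏ i, p i ^ r i) w K ∧
        K.card = ∑ i, (H i).card * ((p i ^ r i - 1) / (p i - 1)) *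
          ∏ j ∈ Finset.Ioi i, p j ^ r j
  | 0, _, _, _, _, _, _ => ⟨∅, ⟨by simp, by simp⟩, by simp⟩
  | n + 1, p, hp, hpw, H, hH, r => by
    obtain ⟨G, hG, hcard⟩ := exists_isGeneratorSet_prod hw (fun i => p i.succ) (fun i => hp _)
      (fun i => hpw _) (fun i => H i.succ) (fun i => hH _) (fun i => r i.succ)
    obtain ⟨K, hK, hcard'⟩ := (hH 0).exists_pow_mul hw (hp 0) (hpw 0) (fun j hj hjw => by
      push_cast
      exact IsCoprime.prod_left fun i _ =>
        (isCoprime_prime_of_abs_lt (hp i.succ) (by have := hpw i.succ; omega) hj hjw).pow_left)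
      hG (r 0)
    refine ⟨K, by rwa [Fin.prod_univ_succ], ?_⟩
    rw [hcard', hcard, Fin.sum_univ_succ]
    simp only [Fin.Ioi_zero_eq_map, Fin.Ioi_succ, Finset.prod_map, Fin.coe_succEmb]

theorem stmt_5 (w n : ℕ) (hw : 2 ≤ w) (p : Fin n → ℕ) (hp : ∀ i, (p i).Prime)
    (hmono : StrictMono p) (hpw : ∀ i, 2 * w - 1 ≤ p i) (m : Fin n → ℕ)
    (hCAC : ∀ i, ∃ C : Finset (Finset (ZMod (p i))),
      IsCAC (p i) w C ∧ (∀ S ∈ C, IsEquiDiff w S) ∧ C.card = m i)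
    (r : Fin n → ℕ) (hr : ∀ i, 0 < r i) :
    ∃ C : Finset (Finset (ZMod (∏ i, p i ^ r i))),
      IsCAC (∏ i, p i ^ r i) w C ∧ (∀ S ∈ C, IsEquiDiff w S) ∧
      C.card = ∑ i, m i * ((p i ^ r i - 1) / (p i - 1)) * ∏ j ∈ Finset.Ioi i, p j ^ r j := by
  have hgen : ∀ i, ∃ H : Finset ℕ, IsGeneratorSet (p i) w H ∧ H.card = m i := by
    intro i
    obtain ⟨C, hC, hE, hcard⟩ := hCAC i
    have : NeZero (p i) := ⟨(hp i).ne_zero⟩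
    obtain ⟨H, hH, hHC⟩ := exists_isGeneratorSet hC hE
    exact ⟨H, hH, hHC.trans hcard⟩
  choose H hH hHm using hgen
  obtain ⟨K, hK, hcard⟩ := exists_isGeneratorSet_prod hw p hp hpw H hH r
  obtain ⟨C, hC, hE, hCK⟩ := hK.exists_isCAC hw
  exact ⟨C, hC, hE, by simp only [hCK, hcard, hHm]⟩
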